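/- arXiv:2409.06101 — 3 statements merged into one kernel-verified Lean document; each statement's English description precedes it below -/
import Mathlib

section
/- If E_x ∈ ℝ^{r_x × d_x} has full row rank r_x and Ω Ωᵀ is invertible, then the function G ↦ L_pred(E_x, G) = (1/n)‖E_x Y − G E_{xu} Ω‖_F² is strictly convex on ℝ^{r_x × (r_x + d_u)}. -/
open Matrix

/-- Squared Frobenius norm of a real matrix. -/
noncomputable def frobSq {m n : Type*} [Fintype m] [Fintype n] (M : Matrix m n ℝ) : ℝ :=
  ∑ i, ∑ j, (M i j) ^ 2

/-- The augmented block-diagonal matrix `E_{xu}` with blocks `E_x` and `I_{d_u}`. -/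
def Exu {d_x d_u r_x : ℕ} (Ex : Matrix (Fin r_x) (Fin d_x) ℝ) :
    Matrix (Fin r_x ⊕ Fin d_u) (Fin d_x ⊕ Fin d_u) ℝ :=
  Matrix.fromBlocks Ex 0 0 1

/-- The prediction loss `L_pred(E_x, G) = (1/n) ‖E_x Y − G E_{xu} Ω‖_F²`. -/
noncomputable def Lpred {d_x d_u r_x n : ℕ}
    (Y : Matrix (Fin d_x) (Fin n) ℝ) (Ω : Matrix (Fin d_x ⊕ Fin d_u) (Fin n) ℝ)
    (Ex : Matrix (Fin r_x) (Fin d_x) ℝ)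
    (G : Matrix (Fin r_x) (Fin r_x ⊕ Fin d_u) ℝ) : ℝ :=
  (1 / (n : ℝ)) * frobSq (Ex * Y - G * Exu (d_u := d_u) Ex * Ω)

lemma frobSq_combo {m n : Type*} [Fintype m] [Fintype n] (P Q : Matrix m n ℝ) (a b : ℝ)
    (hab : a + b = 1) :
    frobSq (a • P + b • Q) = a * frobSq P + b * frobSq Q - a * b * frobSq (P - Q) := by
  obtain rfl : b = 1 - a := by linarith
  simp only [frobSq, Finset.mul_sum, ← Finset.sum_add_distrib, ← Finset.sum_sub_distrib]
  refine Finset.sum_congr rfl fun i _ => Finset.sum_congr rfl fun j _ => ?_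
  simp only [Matrix.add_apply, Matrix.sub_apply, Matrix.smul_apply, smul_eq_mul]
  ring

lemma frobSq_pos {m n : Type*} [Fintype m] [Fintype n] (P : Matrix m n ℝ) (h : P ≠ 0) :
    0 < frobSq P := by
  have hnn : 0 ≤ frobSq P :=
    Finset.sum_nonneg fun i _ => Finset.sum_nonneg fun j _ => sq_nonneg _
  refine lt_of_le_of_ne hnn fun h0 => h ?_
  ext i j
  have h1 := (Finset.sum_eq_zero_iff_of_nonneg
    (fun i _ => Finset.sum_nonneg fun j _ => sq_nonneg (P i j))).1 h0.symm i (Finset.mem_univ _)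
  have h2 := (Finset.sum_eq_zero_iff_of_nonneg
    (fun j _ => sq_nonneg (P i j))).1 h1 j (Finset.mem_univ _)
  simpa using h2

lemma exists_right_inv {r d : ℕ} (E : Matrix (Fin r) (Fin d) ℝ) (h : E.rank = r) :
    ∃ B : Matrix (Fin d) (Fin r) ℝ, E * B = 1 := by
  have h1 : (E * Eᵀ).rank = Fintype.card (Fin r) := by
    rw [Matrix.rank_self_mul_transpose, h, Fintype.card_fin]
  have hu : IsUnit (E * Eᵀ) := by
    rw [← Matrix.linearIndependent_rows_iff_isUnit, linearIndependent_iff_card_eq_finrank_span,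
      ← h1, Matrix.rank_eq_finrank_span_row]
    rfl
  refine ⟨Eᵀ * (E * Eᵀ)⁻¹, ?_⟩
  rw [← Matrix.mul_assoc, Matrix.mul_nonsing_inv _ ((Matrix.isUnit_iff_isUnit_det _).1 hu)]

/-- If `E_x` has full row rank `r_x` and `Ω Ωᵀ` is invertible, then
`G ↦ L_pred(E_x, G)` is strictly convex on the whole space. -/
theorem lpred_strictConvexOn (d_x d_u r_x n : ℕ)
    (hdx : 0 < d_x) (hdu : 0 < d_u) (hrx : 0 < r_x) (hn : 0 < n) (hrd : r_x ≤ d_x)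
    (Y : Matrix (Fin d_x) (Fin n) ℝ) (Ω : Matrix (Fin d_x ⊕ Fin d_u) (Fin n) ℝ)
    (hΩ : IsUnit (Ω * Ωᵀ))
    (Ex : Matrix (Fin r_x) (Fin d_x) ℝ) (hEx : Ex.rank = r_x) :
    StrictConvexOn ℝ Set.univ
      (fun G : Matrix (Fin r_x) (Fin r_x ⊕ Fin d_u) ℝ => Lpred Y Ω Ex G) := by
  obtain ⟨B, hB⟩ := exists_right_inv Ex hEx
  have hinj : ∀ D : Matrix (Fin r_x) (Fin r_x ⊕ Fin d_u) ℝ,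
      D * Exu (d_u := d_u) Ex * Ω = 0 → D = 0 := by
    intro D hD
    have h1 : D * Exu (d_u := d_u) Ex * (Ω * Ωᵀ) = 0 := by
      rw [← Matrix.mul_assoc, hD, Matrix.zero_mul]
    have h2 : D * Exu (d_u := d_u) Ex = 0 := by
      have h3 := congrArg (· * (Ω * Ωᵀ)⁻¹) h1
      simpa only [Matrix.mul_assoc _ (Ω * Ωᵀ) _, Matrix.zero_mul, Matrix.mul_one,
        Matrix.mul_nonsing_inv _ ((Matrix.isUnit_iff_isUnit_det _).1 hΩ)] using h3
    have h4 : Exu (d_u := d_u) Ex * Matrix.fromBlocks B 0 0 (1 : Matrix (Fin d_u) (Fin d_u) ℝ) = 1 := by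
      simp [Exu, Matrix.fromBlocks_multiply, hB]
    rw [← Matrix.mul_one D, ← h4, ← Matrix.mul_assoc, h2, Matrix.zero_mul]
  refine ⟨convex_univ, fun G _ H _ hGH a b ha hb hab => ?_⟩
  have key : Ex * Y - (a • G + b • H) * Exu (d_u := d_u) Ex * Ω
      = a • (Ex * Y - G * Exu (d_u := d_u) Ex * Ω)
        + b • (Ex * Y - H * Exu (d_u := d_u) Ex * Ω) := by
    have : Ex * Y = a • (Ex * Y) + b • (Ex * Y) := by rw [← add_smul, hab, one_smul]
    simp only [Matrix.add_mul, Matrix.smul_mul, smul_sub]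
    nth_rewrite 1 [this]
    abel
  have hpos : 0 < frobSq ((Ex * Y - G * Exu (d_u := d_u) Ex * Ω)
      - (Ex * Y - H * Exu (d_u := d_u) Ex * Ω)) := by
    refine frobSq_pos _ fun h0 => hGH ?_
    have : (H - G) * Exu (d_u := d_u) Ex * Ω = 0 := by
      rw [← h0, Matrix.sub_mul, Matrix.sub_mul]
      abel
    exact (sub_eq_zero.1 (hinj _ this)).symm
  have hn' : (0 : ℝ) < 1 / (n : ℝ) := by positivity
  simp only [Lpred, smul_eq_mul]
  rw [key, frobSq_combo _ _ a b hab]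
  have := mul_pos hn' (mul_pos (mul_pos ha hb) hpos)
  linarith
end

section
/- Suppose Ω = U_Ω Σ_Ω V_Ωᵀ where U_Ω ∈ ℝ^{(d_x+d_u) × (d_x+d_u)} and V_Ω ∈ ℝ^{n × n} are orthogonal matrices and Σ_Ω ∈ ℝ^{(d_x+d_u) × n}, suppose Ω Ωᵀ is invertible, and suppose E_x ∈ ℝ^{r_x × d_x} has full row rank r_x. Then the unique minimizer G = E_x Y Ωᵀ E_{xu}ᵀ (E_{xu} Ω Ωᵀ E_{xu}ᵀ)⁻¹ of L_pred(E_x, ·) satisfies G = lim_{ε → 0} E_x Y V_Ω (Σ_Ωᵀ U_Ωᵀ E_{xu}ᵀ E_{xu} U_Ω Σ_Ω + ε² I_n)⁻¹ Σ_Ωᵀ U_Ωᵀ E_{xu}ᵀ, where the limit is taken along nonzero real ε. -/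
open Matrix

open Filter

theorem Exu_right_inv {d_x d_u r_x : ℕ} (Ex : Matrix (Fin r_x) (Fin d_x) ℝ)
    (hEx : Ex.rank = r_x) :
    ∃ B : Matrix (Fin d_x ⊕ Fin d_u) (Fin r_x ⊕ Fin d_u) ℝ, Exu (d_u := d_u) Ex * B = 1 := by
  have hs : Function.Surjective Ex.mulVec := by
    have h : LinearMap.range Ex.mulVecLin = ⊤ := by
      apply Submodule.eq_top_of_finrank_eq
      rw [← Matrix.rank, hEx]
      simp
    exact LinearMap.range_eq_top.mp h
  obtain ⟨B, hB⟩ := Matrix.mulVec_surjective_iff_exists_right_inverse.mp hs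
  refine ⟨Matrix.fromBlocks B 0 0 1, ?_⟩
  simp [Exu, Matrix.fromBlocks_multiply, hB]

theorem posDef_gram {m n : Type*} [Fintype m] [Fintype n] [DecidableEq m]
    (A : Matrix m n ℝ) (h : IsUnit (A * Aᵀ)) : (A * Aᵀ).PosDef := by
  have h1 : (A * Aᵀ).PosSemidef := by
    simpa using Matrix.posSemidef_self_mul_conjTranspose A
  exact h1.posDef_iff_isUnit.mpr h

theorem reg_limit {m n p : Type*} [Fintype m] [Fintype n] [DecidableEq m] [DecidableEq n]
    (M : Matrix m n ℝ) (h : IsUnit (M * Mᵀ)) (C : Matrix p n ℝ) :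
    Tendsto (fun ε : ℝ => C * ((Mᵀ * M + ε ^ 2 • (1 : Matrix n n ℝ))⁻¹ * Mᵀ))
      (nhdsWithin 0 {(0 : ℝ)}ᶜ) (nhds (C * (Mᵀ * (M * Mᵀ)⁻¹))) := by
  have hdet : (M * Mᵀ).det ≠ 0 := ((Matrix.isUnit_iff_isUnit_det _).mp h).ne_zero
  have hcont : ContinuousAt
      (fun ε : ℝ => C * (Mᵀ * (M * Mᵀ + ε ^ 2 • (1 : Matrix m m ℝ))⁻¹)) 0 := by
    have h1 : ContinuousAt (fun ε : ℝ => (M * Mᵀ + ε ^ 2 • (1 : Matrix m m ℝ))) 0 := by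
      fun_prop
    have h2 : ContinuousAt (fun ε : ℝ => (M * Mᵀ + ε ^ 2 • (1 : Matrix m m ℝ))⁻¹) 0 := by
      simp only [Matrix.inv_def, Ring.inverse_eq_inv']
      have hd : ContinuousAt (fun ε : ℝ => (M * Mᵀ + ε ^ 2 • (1 : Matrix m m ℝ)).det) 0 :=
        (Continuous.matrix_det continuous_id).continuousAt.comp h1
      have ha : ContinuousAt (fun ε : ℝ => (M * Mᵀ + ε ^ 2 • (1 : Matrix m m ℝ)).adjugate) 0 :=
        (Continuous.matrix_adjugate continuous_id).continuousAt.comp h1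
      exact Filter.Tendsto.smul (Filter.Tendsto.inv₀ hd (by simpa using hdet)) ha
    have h3 : Continuous (fun X : Matrix m m ℝ => C * (Mᵀ * X)) := by fun_prop
    exact h3.continuousAt.comp h2
  have ht := hcont.tendsto.mono_left (nhdsWithin_le_nhds (s := {(0 : ℝ)}ᶜ))
  simp only [ne_eq, OfNat.ofNat_ne_zero, not_false_eq_true, zero_pow, zero_smul, add_zero] at ht
  refine ht.congr' ?_
  filter_upwards [self_mem_nhdsWithin] with ε hε
  have hpos : 0 < ε ^ 2 := by
    have : ε ≠ 0 := hε
    positivity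
  have p1 : (M * Mᵀ + ε ^ 2 • (1 : Matrix m m ℝ)).PosDef := by
    have h1 : (M * Mᵀ).PosSemidef := by
      simpa using Matrix.posSemidef_self_mul_conjTranspose M
    exact Matrix.PosDef.posSemidef_add h1 (Matrix.PosDef.one.smul hpos)
  have p2 : (Mᵀ * M + ε ^ 2 • (1 : Matrix n n ℝ)).PosDef := by
    have h1 : (Mᵀ * M).PosSemidef := by
      simpa using Matrix.posSemidef_conjTranspose_mul_self M
    exact Matrix.PosDef.posSemidef_add h1 (Matrix.PosDef.one.smul hpos)
  have u1 := (Matrix.isUnit_iff_isUnit_det _).mp p1.isUnit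
  have u2 := (Matrix.isUnit_iff_isUnit_det _).mp p2.isUnit
  congr 1
  have key : (Mᵀ * M + ε ^ 2 • (1 : Matrix n n ℝ)) * Mᵀ
      = Mᵀ * (M * Mᵀ + ε ^ 2 • (1 : Matrix m m ℝ)) := by
    simp [Matrix.add_mul, Matrix.mul_add, Matrix.mul_assoc]
  calc Mᵀ * (M * Mᵀ + ε ^ 2 • (1 : Matrix m m ℝ))⁻¹
      = (Mᵀ * M + ε ^ 2 • (1 : Matrix n n ℝ))⁻¹ * ((Mᵀ * M + ε ^ 2 • (1 : Matrix n n ℝ)) * Mᵀ)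
          * (M * Mᵀ + ε ^ 2 • (1 : Matrix m m ℝ))⁻¹ := by
        rw [Matrix.nonsing_inv_mul_cancel_left _ _ u2]
    _ = _ := by
        rw [key, Matrix.mul_assoc, Matrix.mul_nonsing_inv_cancel_right _ _ u1]

/-- Under a full SVD `Ω = U_Ω Σ_Ω V_Ωᵀ`, invertibility of `Ω Ωᵀ`, and full row rank of
`E_x`, the unique minimizer `G = E_x Y Ωᵀ E_{xu}ᵀ (E_{xu} Ω Ωᵀ E_{xu}ᵀ)⁻¹` of
`L_pred(E_x, ·)` equals
`lim_{ε → 0} E_x Y V_Ω (Σ_Ωᵀ U_Ωᵀ E_{xu}ᵀ E_{xu} U_Ω Σ_Ω + ε² I_n)⁻¹ Σ_Ωᵀ U_Ωᵀ E_{xu}ᵀ`. -/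
theorem minimizer_as_limit (d_x d_u r_x n : ℕ)
    (hdx : 0 < d_x) (hdu : 0 < d_u) (hrx : 0 < r_x) (hn : 0 < n) (hrd : r_x ≤ d_x)
    (Y : Matrix (Fin d_x) (Fin n) ℝ) (Ω : Matrix (Fin d_x ⊕ Fin d_u) (Fin n) ℝ)
    (U : Matrix (Fin d_x ⊕ Fin d_u) (Fin d_x ⊕ Fin d_u) ℝ)
    (S : Matrix (Fin d_x ⊕ Fin d_u) (Fin n) ℝ)
    (V : Matrix (Fin n) (Fin n) ℝ)
    (hU : Uᵀ * U = 1) (hV : Vᵀ * V = 1) (hSVD : Ω = U * S * Vᵀ)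
    (hΩ : IsUnit (Ω * Ωᵀ))
    (Ex : Matrix (Fin r_x) (Fin d_x) ℝ) (hEx : Ex.rank = r_x) :
    Tendsto
      (fun ε : ℝ =>
        Ex * Y * V *
          (Sᵀ * Uᵀ * (Exu (d_u := d_u) Ex)ᵀ * Exu (d_u := d_u) Ex * U * S +
            ε ^ 2 • (1 : Matrix (Fin n) (Fin n) ℝ))⁻¹ * Sᵀ * Uᵀ * (Exu (d_u := d_u) Ex)ᵀ)
      (nhdsWithin 0 {(0 : ℝ)}ᶜ)
      (nhds (Ex * Y * Ωᵀ * (Exu (d_u := d_u) Ex)ᵀ *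
        (Exu (d_u := d_u) Ex * Ω * Ωᵀ * (Exu (d_u := d_u) Ex)ᵀ)⁻¹)) := by
  obtain ⟨B, hB⟩ := Exu_right_inv (d_u := d_u) Ex hEx
  generalize Exu (d_u := d_u) Ex = E at *
  have hVV : V * Vᵀ = 1 := mul_eq_one_comm.mp hV
  have hM : E * U * S = E * Ω * V := by
    rw [hSVD]
    simp only [Matrix.mul_assoc, hV, Matrix.mul_one]
  have hgram : (E * U * S) * (E * U * S)ᵀ = E * Ω * Ωᵀ * Eᵀ := by
    rw [hM]
    simp only [Matrix.transpose_mul, Matrix.mul_assoc]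
    rw [← Matrix.mul_assoc V, hVV, Matrix.one_mul]
  have hunit : IsUnit ((E * U * S) * (E * U * S)ᵀ) := by
    rw [hgram]
    have hp := posDef_gram Ω hΩ
    have hinj : Function.Injective E.vecMul := by
      intro x y hxy
      have := congrArg (fun z => Matrix.vecMul z B) hxy
      simpa [Matrix.vecMul_vecMul, hB] using this
    have := hp.mul_mul_conjTranspose_same hinj
    simpa [Matrix.mul_assoc] using this.isUnit
  have hl := reg_limit (E * U * S) hunit (Ex * Y * V)
  rw [hgram] at hl
  have e : Ex * Y * V * ((E * U * S)ᵀ * (E * Ω * Ωᵀ * Eᵀ)⁻¹)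
      = Ex * Y * Ωᵀ * Eᵀ * (E * Ω * Ωᵀ * Eᵀ)⁻¹ := by
    generalize (E * Ω * Ωᵀ * Eᵀ)⁻¹ = Z
    rw [hM]
    simp only [Matrix.transpose_mul, Matrix.mul_assoc]
    rw [← Matrix.mul_assoc V, hVV, Matrix.one_mul]
  rw [e] at hl
  simpa only [Matrix.transpose_mul, Matrix.mul_assoc] using hl
end

section
/- Suppose Ω = U_Ω Σ_Ω V_Ωᵀ with U_Ω ∈ ℝ^{(d_x+d_u) × (d_x+d_u)} and V_Ω ∈ ℝ^{n × n} orthogonal and Σ_Ω ∈ ℝ^{(d_x+d_u) × n}, suppose Ω Ωᵀ is invertible, let Û_Y ∈ ℝ^{d_x × r_x} have orthonormal columns, and set E_x = Û_Yᵀ. Write U_Ωᵀ = [U_{Ω,1}ᵀ U_{Ω,2}ᵀ] where U_{Ω,1} consists of the first d_x rows and U_{Ω,2} of the last d_u rows of U_Ω. Let G = [A_R B_R] (with A_R ∈ ℝ^{r_x × r_x} the first r_x columns and B_R ∈ ℝ^{r_x × d_u} the last d_u columns) be the unique minimizer of L_pred(E_x, ·). Then, with limits taken as ε → 0 along nonzero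 real ε, A_R = lim_{ε → 0} Û_Yᵀ Y V_Ω (Σ_Ωᵀ U_{Ω,1}ᵀ Û_Y Û_Yᵀ U_{Ω,1} Σ_Ω + Σ_Ωᵀ U_{Ω,2}ᵀ U_{Ω,2} Σ_Ω + ε² I_n)⁻¹ Σ_Ωᵀ U_{Ω,1}ᵀ Û_Y and B_R = lim_{ε → 0} Û_Yᵀ Y V_Ω (Σ_Ωᵀ U_{Ω,1}ᵀ Û_Y Û_Yᵀ U_{Ω,1} Σ_Ω + Σ_Ωᵀ U_{Ω,2}ᵀ U_{Ω,2} Σ_Ω + ε² I_n)⁻¹ Σ_Ωᵀ U_{Ω,2}ᵀ. -/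
open Matrix

open Filter

lemma aux_frob_trace {m n : Type*} [Fintype m] [Fintype n] (M : Matrix m n ℝ) :
    frobSq M = (M * Mᵀ).trace := by
  simp [frobSq, Matrix.trace, Matrix.mul_apply, sq]

lemma aux_normal {m k n : Type*} [Fintype m] [Fintype n] [Fintype k]
    (B : Matrix m n ℝ) (A : Matrix k n ℝ) (G : Matrix m k ℝ)
    (h : ∀ G' : Matrix m k ℝ, frobSq (B - G * A) ≤ frobSq (B - G' * A)) :
    G * (A * Aᵀ) = B * Aᵀ := by
  set R := B - G * A with hR
  set H := R * Aᵀ with hH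
  have key : ∀ t : ℝ, 0 ≤ -2 * t * frobSq H + t ^ 2 * frobSq (H * A) := by
    intro t
    have h1 := h (G + t • H)
    have e : B - (G + t • H) * A = R - t • (H * A) := by
      rw [hR, Matrix.add_mul, Matrix.smul_mul]; abel
    rw [e] at h1
    have e2 : frobSq (R - t • (H * A))
        = frobSq R - 2 * t * frobSq H + t ^ 2 * frobSq (H * A) := by
      have c1 : (R * (H * A)ᵀ).trace = frobSq H := by
        rw [aux_frob_trace, Matrix.transpose_mul, ← Matrix.mul_assoc]
      have c2 : ((H * A) * Rᵀ).trace = frobSq H := by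
        rw [← c1, ← Matrix.trace_transpose]; simp [Matrix.transpose_mul]
      rw [aux_frob_trace, Matrix.transpose_sub, Matrix.sub_mul, Matrix.mul_sub, Matrix.mul_sub,
        Matrix.transpose_smul, Matrix.smul_mul, Matrix.mul_smul, Matrix.smul_mul, Matrix.mul_smul]
      simp only [Matrix.trace_sub, Matrix.trace_smul, smul_eq_mul]
      rw [c1, c2, aux_frob_trace R, aux_frob_trace (H * A)]
      ring
    rw [e2] at h1
    linarith
  have hH0 : frobSq H = 0 := by
    have n1 : 0 ≤ frobSq H := by unfold frobSq; positivity
    have n2 : 0 ≤ frobSq (H * A) := by unfold frobSq; positivity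
    by_contra hne
    have hp : 0 < frobSq H := lt_of_le_of_ne n1 (Ne.symm hne)
    have := key (frobSq H / (frobSq (H * A) + 1))
    have h3 : -2 * (frobSq H / (frobSq (H * A) + 1)) * frobSq H
        + (frobSq H / (frobSq (H * A) + 1)) ^ 2 * frobSq (H * A)
        = - (frobSq H) ^ 2 * (frobSq (H * A) + 2) / (frobSq (H * A) + 1) ^ 2 := by
      field_simp; ring
    rw [h3] at this
    have : 0 < (frobSq H) ^ 2 * (frobSq (H * A) + 2) / (frobSq (H * A) + 1) ^ 2 := by positivity
    rw [neg_mul, neg_div] at *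
    linarith
  have hz : H = 0 := by
    rw [aux_frob_trace] at hH0
    exact Matrix.trace_mul_conjTranspose_self_eq_zero_iff.mp hH0
  rw [hH, hR, Matrix.sub_mul, sub_eq_zero] at hz
  rw [hz, Matrix.mul_assoc]

lemma aux_unit {m n : Type*} [Fintype m] [Fintype n] [DecidableEq m] [DecidableEq n]
    (W : Matrix m n ℝ) {ε : ℝ} (hε : ε ≠ 0) :
    IsUnit (W * Wᵀ + ε ^ 2 • (1 : Matrix m m ℝ)) := by
  have h1 : (W * Wᵀ).PosSemidef := Matrix.posSemidef_self_mul_conjTranspose W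
  have h2 : (ε ^ 2 • (1 : Matrix m m ℝ)).PosDef := Matrix.PosDef.one.smul (by positivity)
  exact (Matrix.PosDef.posSemidef_add h1 h2).isUnit

lemma aux_push {m n : Type*} [Fintype m] [Fintype n] [DecidableEq m] [DecidableEq n]
    (W : Matrix m n ℝ) {ε : ℝ} (hε : ε ≠ 0) :
    (Wᵀ * W + ε ^ 2 • (1 : Matrix n n ℝ))⁻¹ * Wᵀ
      = Wᵀ * (W * Wᵀ + ε ^ 2 • (1 : Matrix m m ℝ))⁻¹ := by
  have h1 := (Matrix.isUnit_iff_isUnit_det _).mp (aux_unit W hε)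
  have h2 := (Matrix.isUnit_iff_isUnit_det _).mp (aux_unit Wᵀ hε)
  rw [Matrix.transpose_transpose] at h2
  set P := Wᵀ * W + ε ^ 2 • (1 : Matrix n n ℝ) with hP
  set Q := W * Wᵀ + ε ^ 2 • (1 : Matrix m m ℝ) with hQ
  have e : P * Wᵀ = Wᵀ * Q := by
    rw [hP, hQ, Matrix.add_mul, Matrix.mul_add]; simp [Matrix.mul_assoc]
  calc P⁻¹ * Wᵀ = P⁻¹ * (Wᵀ * Q * Q⁻¹) := by
        rw [Matrix.mul_assoc, Matrix.mul_nonsing_inv _ h1, Matrix.mul_one]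
    _ = P⁻¹ * P * (Wᵀ * Q⁻¹) := by rw [← e]; simp only [Matrix.mul_assoc]
    _ = Wᵀ * Q⁻¹ := by rw [Matrix.nonsing_inv_mul _ h2, Matrix.one_mul]

lemma aux_lim {m n k : Type*} [Fintype m] [Fintype n] [Fintype k] [DecidableEq m] [DecidableEq n]
    (W : Matrix m n ℝ) (B : Matrix k n ℝ) (G : Matrix k m ℝ)
    (hG : G * (W * Wᵀ) = B * Wᵀ) (hK : IsUnit (W * Wᵀ)) :
    Tendsto (fun ε : ℝ => B * (Wᵀ * W + ε ^ 2 • (1 : Matrix n n ℝ))⁻¹ * Wᵀ)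
      (nhdsWithin 0 {(0 : ℝ)}ᶜ) (nhds G) := by
  have hd := (Matrix.isUnit_iff_isUnit_det _).mp hK
  have hc : Continuous fun ε : ℝ => W * Wᵀ + ε ^ 2 • (1 : Matrix m m ℝ) := by fun_prop
  have hinv : ContinuousAt
      (fun ε : ℝ => G * (W * Wᵀ) * (W * Wᵀ + ε ^ 2 • (1 : Matrix m m ℝ))⁻¹) 0 := by
    have h1 : ContinuousAt (fun ε : ℝ => (W * Wᵀ + ε ^ 2 • (1 : Matrix m m ℝ))⁻¹) 0 := by
      simp only [Matrix.inv_def, Ring.inverse_eq_inv']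
      refine ContinuousAt.smul (ContinuousAt.inv₀ hc.matrix_det.continuousAt ?_)
        hc.matrix_adjugate.continuousAt
      simpa using hd.ne_zero
    have h2 : Continuous fun X : Matrix m m ℝ => G * (W * Wᵀ) * X := by fun_prop
    exact h2.continuousAt.comp h1
  have ht : Tendsto (fun ε : ℝ => G * (W * Wᵀ) * (W * Wᵀ + ε ^ 2 • (1 : Matrix m m ℝ))⁻¹)
      (nhdsWithin 0 {(0 : ℝ)}ᶜ) (nhds G) := by
    have := hinv.tendsto.mono_left (nhdsWithin_le_nhds (s := {(0 : ℝ)}ᶜ))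
    convert this using 2
    simp only [ne_eq, OfNat.ofNat_ne_zero, not_false_eq_true, zero_pow, zero_smul, add_zero]
    rw [Matrix.mul_assoc, Matrix.mul_nonsing_inv _ hd, Matrix.mul_one]
  refine ht.congr' ?_
  filter_upwards [self_mem_nhdsWithin] with ε hε
  rw [Matrix.mul_assoc B, aux_push W hε, hG, Matrix.mul_assoc]

/-- Corollary (DMDc link): with a full SVD `Ω = U_Ω Σ_Ω V_Ωᵀ`, `Ω Ωᵀ` invertible,
`E_x = Û_Yᵀ` where `Û_Y` has orthonormal columns, and `G = [A_R  B_R]` the unique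
minimizer of `L_pred(E_x, ·)` (here `A_R` consists of the first `r_x` columns of `G`
and `B_R` of the last `d_u` columns), the blocks `A_R` and `B_R` are obtained as the
stated limits as `ε → 0` along nonzero `ε`. `U_{Ω,1}` denotes the first `d_x` rows
of `U_Ω` and `U_{Ω,2}` its last `d_u` rows. -/
theorem blocks_as_limits (d_x d_u r_x n : ℕ)
    (hdx : 0 < d_x) (hdu : 0 < d_u) (hrx : 0 < r_x) (hn : 0 < n) (hrd : r_x ≤ d_x)
    (Y : Matrix (Fin d_x) (Fin n) ℝ) (Ω : Matrix (Fin d_x ⊕ Fin d_u) (Fin n) ℝ)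
    (U : Matrix (Fin d_x ⊕ Fin d_u) (Fin d_x ⊕ Fin d_u) ℝ)
    (S : Matrix (Fin d_x ⊕ Fin d_u) (Fin n) ℝ)
    (V : Matrix (Fin n) (Fin n) ℝ)
    (hU : Uᵀ * U = 1) (hV : Vᵀ * V = 1) (hSVD : Ω = U * S * Vᵀ)
    (hΩ : IsUnit (Ω * Ωᵀ))
    (Uy : Matrix (Fin d_x) (Fin r_x) ℝ) (hUy : Uyᵀ * Uy = 1)
    (G : Matrix (Fin r_x) (Fin r_x ⊕ Fin d_u) ℝ)
    (hG : ∀ G' : Matrix (Fin r_x) (Fin r_x ⊕ Fin d_u) ℝ, Lpred Y Ω Uyᵀ G ≤ Lpred Y Ω Uyᵀ G') :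
    Tendsto
      (fun ε : ℝ =>
        Uyᵀ * Y * V *
          (Sᵀ * (U.submatrix Sum.inl id)ᵀ * Uy * Uyᵀ * U.submatrix Sum.inl id * S +
            Sᵀ * (U.submatrix Sum.inr id)ᵀ * U.submatrix Sum.inr id * S +
            ε ^ 2 • (1 : Matrix (Fin n) (Fin n) ℝ))⁻¹ *
          Sᵀ * (U.submatrix Sum.inl id)ᵀ * Uy)
      (nhdsWithin 0 {(0 : ℝ)}ᶜ)
      (nhds (G.submatrix id Sum.inl)) ∧
    Tendsto
      (fun ε : ℝ =>
        Uyᵀ * Y * V *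
          (Sᵀ * (U.submatrix Sum.inl id)ᵀ * Uy * Uyᵀ * U.submatrix Sum.inl id * S +
            Sᵀ * (U.submatrix Sum.inr id)ᵀ * U.submatrix Sum.inr id * S +
            ε ^ 2 • (1 : Matrix (Fin n) (Fin n) ℝ))⁻¹ *
          Sᵀ * (U.submatrix Sum.inr id)ᵀ)
      (nhdsWithin 0 {(0 : ℝ)}ᶜ)
      (nhds (G.submatrix id Sum.inr)) := by
  set U1 := U.submatrix Sum.inl id with hU1
  set U2 := U.submatrix Sum.inr id with hU2
  set E : Matrix (Fin r_x ⊕ Fin d_u) (Fin d_x ⊕ Fin d_u) ℝ := Exu Uyᵀ with hE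
  set W : Matrix (Fin r_x ⊕ Fin d_u) (Fin n) ℝ := E * U * S with hW
  have hUr : U = Matrix.fromRows U1 U2 := by
    ext i j; rcases i with i | i <;> rfl
  have hWr : W = Matrix.fromRows (Uyᵀ * U1 * S) (U2 * S) := by
    have : E * U = Matrix.fromRows (Uyᵀ * U1) U2 := by
      rw [hUr, hE, Exu, Matrix.fromBlocks_mul_fromRows]
      simp
    rw [hW, this, Matrix.fromRows_mul]
  have hWt : Wᵀ = Matrix.fromCols (Sᵀ * U1ᵀ * Uy) (Sᵀ * U2ᵀ) := by
    rw [hWr, Matrix.transpose_fromRows]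
    simp [Matrix.transpose_mul, Matrix.mul_assoc]
  have hWW : Sᵀ * U1ᵀ * Uy * Uyᵀ * U1 * S + Sᵀ * U2ᵀ * U2 * S = Wᵀ * W := by
    rw [hWt, hWr, Matrix.fromCols_mul_fromRows]
    simp only [Matrix.mul_assoc]
  have hEO : E * Ω = W * Vᵀ := by
    rw [hSVD, hW]; simp only [Matrix.mul_assoc]
  have hK0 : (E * Ω) * (E * Ω)ᵀ = W * Wᵀ := by
    rw [hEO, Matrix.transpose_mul, Matrix.transpose_transpose, Matrix.mul_assoc,
      ← Matrix.mul_assoc Vᵀ, hV, Matrix.one_mul]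
  have hEE : E * Eᵀ = 1 := by
    rw [hE, Exu, Matrix.fromBlocks_transpose, Matrix.fromBlocks_multiply]
    simp [hUy]
  have hK : IsUnit (W * Wᵀ) := by
    have hp : (Ω * Ωᵀ).PosDef :=
      (Matrix.posSemidef_self_mul_conjTranspose Ω).posDef_iff_isUnit.mpr hΩ
    have := hp.mul_mul_conjTranspose_same (B := E) (by
      intro x y hxy
      have h2 := congrArg (fun v => v ᵥ* Eᵀ) hxy
      simpa [Matrix.vecMul_vecMul, hEE] using h2)
    rw [← hK0, Matrix.transpose_mul]
    have h3 := this.isUnit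
    rw [Matrix.conjTranspose_eq_transpose_of_trivial] at h3
    simpa only [Matrix.mul_assoc] using h3
  have hN : G * (W * Wᵀ) = Uyᵀ * Y * V * Wᵀ := by
    have h := aux_normal (Uyᵀ * Y) (E * Ω) G (by
      intro G'
      have h1 := hG G'
      unfold Lpred at h1
      have hn' : (0 : ℝ) < 1 / (n : ℝ) := by positivity
      have h2 := le_of_mul_le_mul_left h1 hn'
      simpa only [Matrix.mul_assoc] using h2)
    rw [hK0] at h
    rw [h, hEO, Matrix.transpose_mul, Matrix.transpose_transpose]
    simp only [Matrix.mul_assoc]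
  have hlim := aux_lim W (Uyᵀ * Y * V) G hN hK
  rw [hWW]
  constructor
  · have hc : Continuous fun X : Matrix (Fin r_x) (Fin r_x ⊕ Fin d_u) ℝ =>
        X.submatrix id Sum.inl := continuous_id.matrix_submatrix _ _
    refine ((hc.tendsto G).comp hlim).congr fun ε => ?_
    simp only [Function.comp]
    generalize (Wᵀ * W + ε ^ 2 • (1 : Matrix (Fin n) (Fin n) ℝ))⁻¹ = X
    rw [hWt, Matrix.mul_fromCols]
    simp only [Matrix.mul_assoc]
    rfl
  · have hc : Continuous fun X : Matrix (Fin r_x) (Fin r_x ⊕ Fin d_u) ℝ =>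
        X.submatrix id Sum.inr := continuous_id.matrix_submatrix _ _
    refine ((hc.tendsto G).comp hlim).congr fun ε => ?_
    simp only [Function.comp]
    generalize (Wᵀ * W + ε ^ 2 • (1 : Matrix (Fin n) (Fin n) ℝ))⁻¹ = X
    rw [hWt, Matrix.mul_fromCols]
    simp only [Matrix.mul_assoc]
    rfl
end
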